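/- Fix an integer t ≥ 1. Then, as n → ∞, |ASM^{{t, t+1, ..., n-1}}(n)| / n^{t(t-1)/2} converges to ∏_{j=1}^{t-2} j!/(2j+1)! (the empty product being 1); that is, |ASM^{{t,...,n-1}}(n)| is asymptotic to (∏_{j=1}^{t-2} j!/(2j+1)!) · n^{t(t-1)/2}. -/

import Mathlib

/-!
Write `t = k + 1`. The corner sums of an alternating sign matrix grow by `0` or `1` down each
column. The condition at the rows `k + 1, …, n - 1` says that, once an entry of a column of the
corner sum matrix repeats below row `k`, it repeats until the last row. Hence
`r(i, j) = min (j, r(k, j) + i - k)` for `i ≥ k` (`IsCornerSum.eq_min`), so the matrix is determined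
by its first `k` rows, and these are arbitrary: the number to estimate is the number of monotone
triangles with `k` rows and entries in `{0, …, n - 1}` (`ncard_inASMI`, `ncard_rowChain`).

Let `D(y) = det (C(y_i, j))`. By multilinearity `D(y)` is the sum of `D(w)` over all `w` with
`y_i ≤ w_i < y_{i+1}` (`chooseDet_succ`), which is the recursion for triangles with a half-open
interlacing condition. Such triangles are monotone, and shifting the `i`-th entry of each row by `i`
turns weakly interlacing rows into half-open interlacing ones. So the number of monotone triangles
with bottom row `y` lies between `D(y)` and `D(y_i + i)`, and the count is squeezed between the sums
of `D` over increasing tuples with entries below `n` and below `n + k`.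

The sum of `det (C(y_i, a_j))` over increasing tuples below `N` is asymptotic to
`N ^ (∑ (a_j + 1)) ∏ (a_j !)⁻¹ ∏ b_j⁻¹ ∏_{i<j} (b_j - b_i) / (b_j + b_i)` with `b_j = a_j + 1`
(`tendsto_sum_det`). This is proved by induction on the number of rows, expanding along the last
row; the recursion for the constant is the identity
`∑ b_m ∏_{i≠m} (b_m + b_i) / (b_m - b_i) = ∑ b_m`, an instance of Lagrange interpolation
(`sum_mul_prod_add_div_sub`). For `a_j = j` the constant telescopes to `∏ j! / (2j+1)!`
(`ordIntegral_value`).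
-/

/-- The rank (corner sum) matrix entry `r_A(i,j)` (1-based `i j`, zero when `i = 0` or `j = 0`). -/
def rk (n : ℕ) (A : Matrix (Fin n) (Fin n) ℤ) (i j : ℕ) : ℤ :=
  ∑ p : Fin n, ∑ q : Fin n, if p.1 < i ∧ q.1 < j then A p q else 0

/-- `A` is an alternating sign matrix: entries in `{-1,0,1}`, the nonzero entries of each row
and column alternate in sign and sum to `1`; equivalently all partial row and column sums are
`0` or `1` and every full row and column sums to `1`. -/
def IsASM (n : ℕ) (A : Matrix (Fin n) (Fin n) ℤ) : Prop :=
  (∀ i j, A i j = -1 ∨ A i j = 0 ∨ A i j = 1) ∧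
  (∀ i : Fin n, ∀ j : ℕ, j ≤ n →
      (∑ q : Fin n, if q.1 < j then A i q else 0) = 0 ∨
      (∑ q : Fin n, if q.1 < j then A i q else 0) = 1) ∧
  (∀ j : Fin n, ∀ i : ℕ, i ≤ n →
      (∑ p : Fin n, if p.1 < i then A p j else 0) = 0 ∨
      (∑ p : Fin n, if p.1 < i then A p j else 0) = 1) ∧
  (∀ i : Fin n, (∑ q : Fin n, A i q) = 1) ∧
  (∀ j : Fin n, (∑ p : Fin n, A p j) = 1)

/-- `A ∈ ASM^I(n)`: `A` is an ASM and for every `i ∈ I` and `j ∈ [n]`,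
`r_A(i,j) = r_A(i-1,j) + 1` or `r_A(i,j) = r_A(i+1,j)`. -/
def InASMI (n : ℕ) (I : Finset ℕ) (A : Matrix (Fin n) (Fin n) ℤ) : Prop :=
  IsASM n A ∧ ∀ i ∈ I, ∀ j, 1 ≤ j → j ≤ n →
    rk n A i j = rk n A (i - 1) j + 1 ∨ rk n A i j = rk n A (i + 1) j

/-- Bruhat order on `ASM(n)`: `A ≤ B` iff `r_A(i,j) ≥ r_B(i,j)` for all `i,j ∈ [n]`. -/
def blE (n : ℕ) (A B : Matrix (Fin n) (Fin n) ℤ) : Prop :=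
  ∀ i j, 1 ≤ i → i ≤ n → 1 ≤ j → j ≤ n → rk n B i j ≤ rk n A i j

/-- Permutation matrix of `w`. -/
def permMatrix (n : ℕ) (w : Equiv.Perm (Fin n)) : Matrix (Fin n) (Fin n) ℤ :=
  Matrix.of fun i j => if w i = j then 1 else 0

/-- `w ∈ S_n^I`: `w(i) < w(i+1)` for all `i ∈ I` (indices 1-based). -/
def IsMinRep (n : ℕ) (I : Finset ℕ) (w : Equiv.Perm (Fin n)) : Prop :=
  ∀ p q : Fin n, (p.1 + 1) ∈ I → q.1 = p.1 + 1 → w p < w q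

/-- Identity matrix. -/
def idMat (n : ℕ) : Matrix (Fin n) (Fin n) ℤ :=
  Matrix.of fun i j => if i = j then 1 else 0

section

open Filter Topology Asymptotics

/-! ### Power asymptotics and a Lagrange interpolation identity -/

theorem tendsto_choose_div (p : ℕ) :
    Tendsto (fun n : ℕ => (n.choose p : ℝ) / (n : ℝ) ^ p) atTop (𝓝 (1 / (p.factorial : ℝ))) := by
  have h : Tendsto (fun n : ℕ => (n : ℝ) * (fun n : ℕ => 1 / (n : ℝ)) n) atTop (𝓝 1) := by
    refine tendsto_const_nhds.congr' ?_
    filter_upwards [eventually_gt_atTop 0] with n hn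
    have : (n : ℝ) ≠ 0 := by positivity
    field_simp
  have := ProbabilityTheory.tendsto_choose_mul_pow_atTop p h
  simpa [div_eq_mul_inv] using this

/-- Summation raises the order of a power asymptotic by one and divides its constant by `p + 1`. The
function `f` is compared with `c p! C(n, p)`, whose partial sums are again binomial coefficients. -/
theorem tendsto_sum_range_div {f : ℕ → ℝ} {p : ℕ} {c : ℝ}
    (hf : Tendsto (fun n : ℕ => f n / (n : ℝ) ^ p) atTop (𝓝 c)) :
    Tendsto (fun n : ℕ => (∑ v ∈ Finset.range n, f v) / (n : ℝ) ^ (p + 1)) atTop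
      (𝓝 (c / (p + 1))) := by
  have hsum : ∀ n : ℕ, ∑ v ∈ Finset.range n, (v.choose p : ℝ) = (n.choose (p + 1) : ℝ) := by
    intro n
    induction n with
    | zero => simp
    | succ n ih => rw [Finset.sum_range_succ, ih, Nat.choose_succ_succ]; push_cast; ring
  have hpf : (p.factorial : ℝ) ≠ 0 := by positivity
  have hdiff : Tendsto (fun n : ℕ =>
      (f n - c * p.factorial * (n.choose p : ℝ)) / (n.choose p : ℝ)) atTop (𝓝 0) := by
    have h1 := (hf.div (tendsto_choose_div p) (by positivity)).sub_const (c * p.factorial)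
    have h0 : c / (1 / (p.factorial : ℝ)) - c * p.factorial = 0 := by field_simp; ring
    rw [h0] at h1
    refine h1.congr' ?_
    filter_upwards [eventually_gt_atTop p] with n hn
    have hn0 : (n : ℝ) ≠ 0 := by
      have : 0 < n := by omega
      positivity
    have hc : (n.choose p : ℝ) ≠ 0 := by
      have := Nat.choose_pos hn.le
      positivity
    simp only [Pi.div_apply]
    field_simp
  have hlo : (fun n : ℕ => f n - c * p.factorial * (n.choose p : ℝ)) =o[atTop]
      (fun n : ℕ => (n.choose p : ℝ)) := by
    refine (isLittleO_iff_tendsto' ?_).2 hdiff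
    filter_upwards [eventually_gt_atTop p] with n hn h
    have := Nat.choose_pos hn.le
    simp at h
    omega
  have htop : Tendsto (fun n : ℕ => ∑ v ∈ Finset.range n, (v.choose p : ℝ)) atTop atTop := by
    simp_rw [hsum]
    refine tendsto_atTop_mono' _ ?_ (tendsto_atTop_add_const_right _ (-(p + 1 : ℝ))
      tendsto_natCast_atTop_atTop)
    filter_upwards [eventually_gt_atTop p] with n hn
    have h2 : n - p ≤ n.choose (p + 1) := by
      obtain ⟨m, rfl⟩ := Nat.exists_eq_add_of_le hn.le
      clear hn
      induction m with
      | zero => simp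
      | succ m ih =>
        rw [← add_assoc, Nat.choose_succ_succ']
        have := Nat.choose_pos (show p ≤ p + m by omega)
        omega
    have h3 : (n : ℝ) ≤ (n.choose (p + 1) : ℝ) + p := by exact_mod_cast (by omega)
    linarith
  have hlo2 := hlo.sum_range (fun n => by positivity) htop
  have h3 : Tendsto (fun n : ℕ => (∑ v ∈ Finset.range n, f v - c * p.factorial *
      (n.choose (p + 1) : ℝ)) / (n.choose (p + 1) : ℝ)) atTop (𝓝 0) := by
    have := hlo2.tendsto_div_nhds_zero
    simp only [Finset.sum_sub_distrib, ← Finset.mul_sum, hsum] at this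
    exact this
  have h4 := (h3.add_const (c * p.factorial)).mul (tendsto_choose_div (p + 1))
  have h5 : (0 + c * (p.factorial : ℝ)) * (1 / ((p + 1).factorial : ℝ)) = c / (p + 1) := by
    rw [Nat.factorial_succ]; push_cast; field_simp; ring
  rw [h5] at h4
  refine h4.congr' ?_
  filter_upwards [eventually_gt_atTop p] with n hn
  have hc : (n.choose (p + 1) : ℝ) ≠ 0 := by
    have := Nat.choose_pos (show p + 1 ≤ n from hn)
    positivity
  field_simp
  ring

/-- Compare the coefficients of `X ^ k` in the Lagrange interpolation formula, at the nodes `b i`,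
for the polynomial `∏ (X + b i) - ∏ (X - b i)`. -/
theorem sum_mul_prod_add_div_sub {k : ℕ} (b : Fin (k + 1) → ℝ) (hb : Function.Injective b) :
    ∑ m, b m * ∏ i : Fin k, (b m + b (m.succAbove i)) / (b m - b (m.succAbove i)) = ∑ m, b m := by
  open Polynomial in
  set P : ℝ[X] := ∏ i, (X - C (b i)) with hP
  set Q : ℝ[X] := ∏ i, (X - C (-b i)) with hQ
  have hPm : P.Monic := monic_prod_of_monic _ _ fun i _ => monic_X_sub_C _
  have hQm : Q.Monic := monic_prod_of_monic _ _ fun i _ => monic_X_sub_C _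
  have hPd : P.natDegree = k + 1 := by simp [hP, natDegree_finsetProd_X_sub_C_eq_card]
  have hQd : Q.natDegree = k + 1 := by
    rw [hQ, natDegree_finsetProd_X_sub_C_eq_card]; simp
  have hdeg : (Q - P).degree < (Finset.univ : Finset (Fin (k + 1))).card := by
    have h := degree_sub_lt_left (p := Q) (q := P) (by
      rw [degree_eq_natDegree hPm.ne_zero, degree_eq_natDegree hQm.ne_zero, hPd, hQd]) hQm.ne_zero
      (by rw [hPm.leadingCoeff, hQm.leadingCoeff])
    rw [degree_eq_natDegree hQm.ne_zero, hQd] at h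
    simpa using h
  have h := Lagrange.coeff_eq_sum (s := (Finset.univ : Finset (Fin (k + 1)))) (v := b)
    hb.injOn hdeg
  have hcP := prod_X_sub_C_coeff_card_pred (Finset.univ : Finset (Fin (k + 1))) b (by simp)
  have hcQ := prod_X_sub_C_coeff_card_pred (Finset.univ : Finset (Fin (k + 1)))
    (fun i => -b i) (by simp)
  rw [coeff_sub, hP, hQ, hcP, hcQ] at h
  simp only [Finset.sum_neg_distrib, neg_neg, sub_neg_eq_add] at h
  have key : ∀ m, (Q - P).eval (b m) / ∏ j ∈ Finset.univ.erase m, (b m - b j) =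
      2 * (b m * ∏ i : Fin k, (b m + b (m.succAbove i)) / (b m - b (m.succAbove i))) := by
    intro m
    have e1 : ∏ j ∈ Finset.univ.erase m, (b m - b j) =
        ∏ i : Fin k, (b m - b (m.succAbove i)) := by
      rw [← Finset.compl_singleton, ← Fin.image_succAbove_univ,
        Finset.prod_image (Fin.succAbove_right_injective).injOn]
    have e2 : (Q - P).eval (b m) = 2 * b m * ∏ i : Fin k, (b m + b (m.succAbove i)) := by
      simp only [hP, hQ, eval_sub, eval_prod, eval_X, eval_C]
      rw [Finset.prod_eq_zero (f := fun j => b m - b j) (Finset.mem_univ m) (sub_self (b m)),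
        Fin.prod_univ_succAbove _ m]
      simp only [sub_neg_eq_add]
      ring
    rw [e1, e2, Finset.prod_div_distrib]
    ring
  rw [← hP, ← hQ, Finset.sum_congr rfl fun m _ => key m, ← Finset.mul_sum] at h
  linarith

/-! ### Sums of determinants over increasing tuples -/

/-- The signed product `∏_{i<j} (b_j - b_i) / (b_j + b_i)` of Schur's Pfaffian. -/
noncomputable def schurProd {k : ℕ} (b : Fin k → ℝ) : ℝ :=
  ∏ i, ∏ j, if i < j then (b j - b i) / (b j + b i) else 1

theorem prod_sign_le (k : ℕ) (m : Fin (k + 1)) :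
    ∏ i : Fin k, (if m ≤ i.castSucc then (-1 : ℝ) else 1) = (-1) ^ (k + (m : ℕ)) := by
  have h : ∀ l : ℕ, ∏ i ∈ Finset.range (m + l), (if m ≤ i then (-1 : ℝ) else 1) = (-1) ^ l := by
    intro l
    induction l with
    | zero =>
      refine Finset.prod_eq_one fun i hi => ?_
      rw [Finset.mem_range] at hi
      exact if_neg (by omega)
    | succ l ih => rw [← add_assoc, Finset.prod_range_succ, ih, if_pos (by omega), pow_succ]
  have h2 := Fin.prod_univ_eq_prod_range (fun i => if (m : ℕ) ≤ i then (-1 : ℝ) else 1) k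
  obtain ⟨l, hl⟩ := Nat.exists_eq_add_of_le (Nat.lt_succ_iff.1 m.2)
  have h3 := h l
  rw [← hl, ← h2] at h3
  have h4 : k + (m : ℕ) = l + 2 * m := by omega
  rw [h4, pow_add, pow_mul]
  simpa [Fin.le_def] using h3

/-- Isolating the factors of the pairs that contain `m`; the sign counts the indices above `m`. -/
theorem schurProd_succAbove {k : ℕ} (b : Fin (k + 1) → ℝ) (m : Fin (k + 1)) :
    schurProd b = (-1) ^ (k + (m : ℕ)) *
      (∏ i : Fin k, (b m - b (m.succAbove i)) / (b m + b (m.succAbove i))) *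
      schurProd (b ∘ m.succAbove) := by
  have e : ∀ i : Fin k,
      (if m < m.succAbove i then
        (b (m.succAbove i) - b m) / (b (m.succAbove i) + b m) else 1) *
      (if m.succAbove i < m then
        (b m - b (m.succAbove i)) / (b m + b (m.succAbove i)) else 1) =
      (if m ≤ i.castSucc then (-1 : ℝ) else 1) *
        ((b m - b (m.succAbove i)) / (b m + b (m.succAbove i))) := by
    intro i
    by_cases h : m ≤ i.castSucc
    · rw [Fin.succAbove_of_le_castSucc _ _ h, if_pos h,
        if_pos (lt_of_le_of_lt h Fin.castSucc_lt_succ),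
        if_neg (lt_of_le_of_lt h Fin.castSucc_lt_succ).not_gt, add_comm (b m), ← neg_sub, neg_div]
      ring
    · rw [Fin.succAbove_of_castSucc_lt _ _ (not_le.1 h), if_neg h, if_pos (not_le.1 h),
        if_neg (not_le.1 h).not_gt]
  have e2 := Finset.prod_congr (rfl : (Finset.univ : Finset (Fin k)) = _) fun i _ => e i
  rw [Finset.prod_mul_distrib, Finset.prod_mul_distrib, prod_sign_le] at e2
  rw [← e2]
  unfold schurProd
  rw [Fin.prod_univ_succAbove _ m]
  simp_rw [Fin.prod_univ_succAbove _ m]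
  rw [Finset.prod_mul_distrib, ← mul_assoc]
  simp only [lt_irrefl, if_false, one_mul, Function.comp_apply, Fin.succAbove_lt_succAbove_iff]

/-- The value of `∫_{0<x_1<⋯<x_k<1} det (x_i ^ (b_j - 1))` for positive `b_j`, defined by its closed
form. -/
noncomputable def ordIntegral {k : ℕ} (b : Fin k → ℝ) : ℝ := (∏ i, (b i)⁻¹) * schurProd b

/-- The recursion satisfied by the integrals: expand the determinant along the row of the largest
variable `x` and rescale the other variables by `x`. -/
theorem sum_ordIntegral {k : ℕ} (b : Fin (k + 1) → ℝ) (hb : Function.Injective b)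
    (hb0 : ∀ i, 0 < b i) :
    ∑ m : Fin (k + 1), (-1) ^ (k + (m : ℕ)) * ordIntegral (b ∘ m.succAbove) =
      (∑ i, b i) * ordIntegral b := by
  rw [← sum_mul_prod_add_div_sub b hb, Finset.sum_mul]
  refine Finset.sum_congr rfl fun m _ => ?_
  unfold ordIntegral
  rw [schurProd_succAbove b m, Fin.prod_univ_succAbove _ m]
  have h1 : (∏ i : Fin k, (b m + b (m.succAbove i)) / (b m - b (m.succAbove i))) *
      (∏ i : Fin k, (b m - b (m.succAbove i)) / (b m + b (m.succAbove i))) = 1 := by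
    rw [← Finset.prod_mul_distrib]
    refine Finset.prod_eq_one fun i _ => ?_
    have h2 : b m - b (m.succAbove i) ≠ 0 :=
      sub_ne_zero.2 fun h => Fin.succAbove_ne m i (hb h).symm
    have h3 : b m + b (m.succAbove i) ≠ 0 := (add_pos (hb0 _) (hb0 _)).ne'
    field_simp
  have h4 : b m * (b m)⁻¹ = 1 := mul_inv_cancel₀ (hb0 m).ne'
  simp only [Function.comp_apply]
  linear_combination (-((∏ i, (b (m.succAbove i))⁻¹) * (-1) ^ (k + (m : ℕ)) *
    schurProd (b ∘ m.succAbove))) * (h1 * (b m * (b m)⁻¹) + h4)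

open Classical in
/-- Strictly increasing `k`-tuples with entries in `{0, …, N - 1}`. -/
noncomputable def strictTuples (k N : ℕ) : Finset (Fin k → ℕ) :=
  (Fintype.piFinset fun _ => Finset.range N).filter StrictMono

theorem mem_strictTuples {k N : ℕ} {y : Fin k → ℕ} :
    y ∈ strictTuples k N ↔ (∀ i, y i < N) ∧ StrictMono y := by
  simp [strictTuples]

theorem sum_strictTuples_succ {M : Type*} [AddCommMonoid M] (k N : ℕ)
    (f : (Fin (k + 1) → ℕ) → M) :
    ∑ y ∈ strictTuples (k + 1) N, f y =
      ∑ v ∈ Finset.range N, ∑ y ∈ strictTuples k v, f (Fin.snoc (α := fun _ => ℕ) y v) := by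
  rw [Finset.sum_sigma']
  refine Finset.sum_bij' (fun y _ => ⟨y (Fin.last k), Fin.init y⟩)
    (fun p _ => Fin.snoc (α := fun _ => ℕ) p.2 p.1) ?_ ?_ ?_ ?_ ?_
  · intro y hy
    rw [mem_strictTuples] at hy
    simp only [Finset.mem_sigma, Finset.mem_range, mem_strictTuples]
    exact ⟨hy.1 _, fun i => hy.2 (Fin.castSucc_lt_last i),
      fun i j hij => hy.2 (Fin.castSucc_lt_castSucc_iff.2 hij)⟩
  · rintro ⟨v, y⟩ hy
    simp only [Finset.mem_sigma, Finset.mem_range, mem_strictTuples] at hy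
    rw [mem_strictTuples]
    refine ⟨fun i => ?_, fun i j hij => ?_⟩
    · induction i using Fin.lastCases with
      | last => simpa using hy.1
      | cast i => simpa using (hy.2.1 i).trans hy.1
    · induction j using Fin.lastCases with
      | last =>
        obtain ⟨i, rfl⟩ := Fin.exists_castSucc_eq.2 hij.ne
        simpa using hy.2.1 i
      | cast j =>
        obtain ⟨i, rfl⟩ := Fin.exists_castSucc_eq.2 (hij.trans (Fin.castSucc_lt_last j)).ne
        simpa using hy.2.2 (Fin.castSucc_lt_castSucc_iff.1 hij)
  · intro y _
    simp
  · rintro ⟨v, y⟩ _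
    simp
  · intro y _
    simp

/-- The sum of `det (C(y_i, a_j))` over strictly increasing tuples, suitably scaled, behaves like a
Riemann sum for the integral of `det (x_i ^ a_j / a_j!)` over the region `0 < x_1 < ⋯ < x_k < 1`.
The proof is by induction on `k`, through the largest entry of `y`. -/
theorem tendsto_sum_det {k : ℕ} (a : Fin k → ℕ) (ha : Function.Injective a) :
    Tendsto (fun N : ℕ => (∑ y ∈ strictTuples k N,
        (Matrix.of fun i j => ((y i).choose (a j) : ℝ)).det) / (N : ℝ) ^ (∑ j, (a j + 1)))
      atTop (𝓝 ((∏ j, ((a j).factorial : ℝ)⁻¹) * ordIntegral fun j => (a j : ℝ) + 1)) := by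
  induction k with
  | zero =>
    have h : ∀ N, strictTuples 0 N = Finset.univ := by
      intro N
      ext y
      simp only [mem_strictTuples, Subsingleton.strictMono, Finset.mem_univ, IsEmpty.forall_iff,
        and_self]
    simp [h, ordIntegral, schurProd]
  | succ k ih =>
    set b : Fin (k + 1) → ℝ := fun j => (a j : ℝ) + 1 with hb
    -- expand each determinant along its last row
    have hexp : ∀ N : ℕ, ∑ y ∈ strictTuples (k + 1) N,
        (Matrix.of fun i j => ((y i).choose (a j) : ℝ)).det =
        ∑ v ∈ Finset.range N, ∑ m : Fin (k + 1), (-1) ^ (k + (m : ℕ)) * (v.choose (a m) : ℝ) *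
          ∑ y ∈ strictTuples k v,
            (Matrix.of fun i j => ((y i).choose (a (m.succAbove j)) : ℝ)).det := by
      intro N
      rw [sum_strictTuples_succ]
      refine Finset.sum_congr rfl fun v _ => ?_
      simp_rw [Finset.mul_sum]
      rw [Finset.sum_comm]
      refine Finset.sum_congr rfl fun y _ => ?_
      rw [Matrix.det_succ_row _ (Fin.last k)]
      refine Finset.sum_congr rfl fun m _ => ?_
      simp only [Fin.val_last, Matrix.of_apply, Fin.snoc_last]
      congr 2
      ext i j
      simp
    simp_rw [hexp]
    obtain ⟨s, hs⟩ : ∃ s, ∑ j, (a j + 1) = s + 1 :=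
      ⟨a 0 + ∑ j : Fin k, (a j.succ + 1), by rw [Fin.sum_univ_succ]; ring⟩
    have hsr : (∑ j, b j) = s + 1 := by
      have := congrArg (Nat.cast (R := ℝ)) hs
      push_cast at this
      simpa [hb] using this
    have hlim : Tendsto (fun v : ℕ => (∑ m : Fin (k + 1), (-1) ^ (k + (m : ℕ)) *
        (v.choose (a m) : ℝ) * ∑ y ∈ strictTuples k v,
          (Matrix.of fun i j => ((y i).choose (a (m.succAbove j)) : ℝ)).det) / (v : ℝ) ^ s) atTop
        (𝓝 (∑ m : Fin (k + 1), (-1) ^ (k + (m : ℕ)) * (1 / ((a m).factorial : ℝ)) *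
          ((∏ j, ((a (m.succAbove j)).factorial : ℝ)⁻¹) * ordIntegral (b ∘ m.succAbove)))) := by
      simp_rw [Finset.sum_div]
      refine tendsto_finsetSum _ fun m _ => ?_
      have h1 := ih (a ∘ m.succAbove) (ha.comp Fin.succAbove_right_injective)
      refine (((tendsto_choose_div (a m)).const_mul ((-1) ^ (k + (m : ℕ)))).mul h1).congr
        fun v => ?_
      have hsm : s = a m + ∑ j, (a (m.succAbove j) + 1) := by
        rw [Fin.sum_univ_succAbove _ m] at hs
        omega
      rw [hsm, pow_add (v : ℝ)]
      simp only [Function.comp_apply]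
      simp only [div_eq_mul_inv, mul_inv]
      ring
    have h := tendsto_sum_range_div hlim
    rw [hs]
    convert h using 2
    have hs1 : (s : ℝ) + 1 ≠ 0 := by positivity
    rw [eq_div_iff hs1, ← hsr]
    have := sum_ordIntegral b (fun i j hij => ha (by simpa [hb] using hij))
      (fun i => by simp only [hb]; positivity)
    rw [mul_assoc, mul_comm (ordIntegral b), ← this, Finset.mul_sum]
    refine Finset.sum_congr rfl fun m _ => ?_
    rw [Fin.prod_univ_succAbove _ m]
    ring

/-! ### The limiting constant -/

/-- Passing from `k` to `k + 1` multiplies the left hand side by `k! / (2 k + 1)!`; the factors of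
`schurProd` that contain the last index contribute `k! (k + 1)! / (2 k + 1)!`. -/
theorem ordIntegral_value (k : ℕ) :
    (∏ j : Fin k, ((j : ℕ).factorial : ℝ)⁻¹) * ordIntegral (fun j : Fin k => ((j : ℕ) : ℝ) + 1) =
      ∏ j ∈ Finset.Icc 1 (k - 1), (Nat.factorial j : ℝ) / (Nat.factorial (2 * j + 1) : ℝ) := by
  have hrange : ∏ j ∈ Finset.Icc 1 (k - 1),
      (Nat.factorial j : ℝ) / (Nat.factorial (2 * j + 1) : ℝ) =
      ∏ j ∈ Finset.range k, (Nat.factorial j : ℝ) / (Nat.factorial (2 * j + 1) : ℝ) := by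
    rcases k with _ | k
    · simp
    · rw [Finset.prod_range_succ', Nat.add_sub_cancel, Finset.range_eq_Ico,
        Finset.prod_Ico_add' (fun j => (Nat.factorial j : ℝ) / (Nat.factorial (2 * j + 1) : ℝ))]
      simp only [zero_add, Nat.factorial_zero, mul_zero, Nat.factorial_one, Nat.cast_one, div_one,
        mul_one]
      rfl
  rw [hrange]
  clear hrange
  induction k with
  | zero => simp [ordIntegral, schurProd]
  | succ k ih =>
    rw [Finset.prod_range_succ, ← ih]
    unfold ordIntegral
    rw [schurProd_succAbove _ (Fin.last k), Fin.prod_univ_castSucc, Fin.prod_univ_castSucc]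
    have h1 : ∏ i : Fin k, ((((Fin.last k : Fin (k + 1)) : ℕ) : ℝ) + 1 -
        ((((Fin.last k).succAbove i : Fin (k + 1)) : ℕ) + 1)) /
        ((((Fin.last k : Fin (k + 1)) : ℕ) : ℝ) + 1 +
        ((((Fin.last k).succAbove i : Fin (k + 1)) : ℕ) + 1)) =
        (k.factorial : ℝ) * ((k + 1).factorial : ℝ) / ((2 * k + 1).factorial : ℝ) := by
      simp only [Fin.succAbove_last, Fin.val_last, Fin.val_castSucc]
      rw [Fin.prod_univ_eq_prod_range
          (fun i => ((k : ℝ) + 1 - (i + 1)) / ((k : ℝ) + 1 + (i + 1))) k,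
        Finset.prod_div_distrib]
      have e1 : ∏ i ∈ Finset.range k, ((k : ℝ) + 1 - (i + 1)) = (k.factorial : ℝ) := by
        rw [← Nat.descFactorial_self, Nat.descFactorial_eq_prod_range, Nat.cast_prod]
        refine Finset.prod_congr rfl fun i hi => ?_
        rw [Nat.cast_sub (Finset.mem_range.1 hi).le]
        ring
      have e2 : ((k + 1).factorial : ℝ) * ∏ i ∈ Finset.range k, ((k : ℝ) + 1 + (i + 1)) =
          ((2 * k + 1).factorial : ℝ) := by
        have := Nat.factorial_mul_ascFactorial (k + 1) k
        rw [Nat.ascFactorial_eq_prod_range, show k + 1 + k = 2 * k + 1 by omega] at this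
        rw [← this]
        push_cast
        congr 1
        exact Finset.prod_congr rfl fun i _ => by ring
      rw [e1, ← e2]
      have : ((k + 1).factorial : ℝ) ≠ 0 := by positivity
      field_simp
    have h2 : ((-1 : ℝ)) ^ (k + ((Fin.last k : Fin (k + 1)) : ℕ)) = 1 := by
      rw [Fin.val_last, ← two_mul, pow_mul]; simp
    rw [h1, h2, Nat.factorial_succ k]
    have h3 : (k.factorial : ℝ) ≠ 0 := by positivity
    have h4 : (k : ℝ) + 1 ≠ 0 := by positivity
    have h5 : ((fun j : Fin (k + 1) => ((j : ℕ) : ℝ) + 1) ∘ (Fin.last k).succAbove) =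
      fun j : Fin k => ((j : ℕ) : ℝ) + 1 := by
      funext j; simp
    rw [h5]
    simp only [Fin.val_castSucc, Fin.val_last]
    push_cast
    field_simp

/-! ### Monotone triangles with a given bottom row -/

open Classical in
/-- Strictly increasing `k`-tuples `w` with `y_i ≤ w_i ≤ y_{i+1}`: the possible rows
above the row `y` of a monotone triangle. -/
noncomputable def interlacing {k : ℕ} (y : Fin (k + 1) → ℕ) : Finset (Fin k → ℕ) :=
  (Fintype.piFinset fun i : Fin k => Finset.Icc (y i.castSucc) (y i.succ)).filter StrictMono

theorem mem_interlacing {k : ℕ} {y : Fin (k + 1) → ℕ} {w : Fin k → ℕ} :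
    w ∈ interlacing y ↔ (∀ i, y i.castSucc ≤ w i ∧ w i ≤ y i.succ) ∧ StrictMono w := by
  simp [interlacing]

/-- The number of monotone triangles with bottom row `y`. -/
noncomputable def triCount : (k : ℕ) → (Fin k → ℕ) → ℕ
  | 0, _ => 1
  | k + 1, y => ∑ w ∈ interlacing y, triCount k w

/-- The determinant `det (C(y_i, j))`, equal to `∏_{i<j} (y_j - y_i) / (j - i)`. -/
def chooseDet {k : ℕ} (y : Fin k → ℕ) : ℤ :=
  (Matrix.of fun i j : Fin k => ((y i).choose j : ℤ)).det

/-- Subtracting adjacent rows turns the determinant of `y` into a determinant whose rows are sums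
over `[y_i, y_{i+1})`, which multilinearity expands. -/
theorem chooseDet_succ {k : ℕ} (y : Fin (k + 1) → ℕ) (hy : Monotone y) :
    chooseDet y = ∑ w ∈ Fintype.piFinset fun i : Fin k =>
      Finset.Ico (y i.castSucc) (y i.succ), chooseDet w := by
  have hsum : ∀ (j a b : ℕ), a ≤ b →
      ∑ w ∈ Finset.Ico a b, (w.choose j : ℤ) = b.choose (j + 1) - a.choose (j + 1) := by
    intro j a b hab
    induction b, hab using Nat.le_induction with
    | base => simp
    | succ b hab ih =>
      rw [Finset.sum_Ico_succ_top hab, ih, Nat.choose_succ_succ']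
      push_cast
      ring
  have h1 := (Matrix.detRowAlternating (n := Fin k) (R := ℤ)).toMultilinearMap.map_sum_finset
    (fun (_ : Fin k) (w : ℕ) (j : Fin k) => (w.choose j : ℤ))
    (fun i : Fin k => Finset.Ico (y i.castSucc) (y i.succ))
  have h2 : ∑ w ∈ Fintype.piFinset fun i : Fin k =>
      Finset.Ico (y i.castSucc) (y i.succ), chooseDet w =
      (Matrix.of fun i j : Fin k =>
        ((y i.succ).choose (j + 1) : ℤ) - (y i.castSucc).choose (j + 1)).det := by
    refine h1.symm.trans (congrArg Matrix.det ?_)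
    ext i j
    rw [Finset.sum_apply]
    exact hsum j _ _ (hy Fin.castSucc_lt_succ.le)
  rw [h2]
  unfold chooseDet
  set B : Matrix (Fin (k + 1)) (Fin (k + 1)) ℤ := Matrix.of fun i j =>
    Fin.cases ((y 0).choose j : ℤ)
      (fun i : Fin k => ((y i.succ).choose j : ℤ) - (y i.castSucc).choose j) i with hB
  rw [Matrix.det_eq_of_forall_row_eq_smul_add_pred (B := B) (fun _ => 1)
    (fun j => by simp [hB]) (fun i j => by simp [hB])]
  rw [Matrix.det_succ_column_zero, Fin.sum_univ_succ, Finset.sum_eq_zero]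
  · simp only [hB, Matrix.of_apply, Fin.cases_zero, Fin.val_zero, pow_zero, Nat.choose_zero_right,
      Nat.cast_one, one_mul, add_zero]
    congr 1
  · intro i _
    simp [hB]

theorem strictMono_of_mem_Ico {k : ℕ} {y : Fin (k + 1) → ℕ} {w : Fin k → ℕ}
    (h : ∀ i : Fin k, y i.castSucc ≤ w i ∧ w i < y i.succ) : StrictMono w := by
  cases k with
  | zero => exact Subsingleton.strictMono _
  | succ k =>
    refine Fin.strictMono_iff_lt_succ.2 fun i => ?_
    have h1 := (h i.castSucc).2
    have h2 := (h i.succ).1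
    rw [Fin.succ_castSucc] at h1
    exact h1.trans_le h2

theorem chooseDet_nonneg {k : ℕ} (y : Fin k → ℕ) (hy : StrictMono y) : 0 ≤ chooseDet y := by
  induction k with
  | zero => simp [chooseDet]
  | succ k ih =>
    rw [chooseDet_succ y hy.monotone]
    refine Finset.sum_nonneg fun w hw => ih w ?_
    simp only [Fintype.mem_piFinset, Finset.mem_Ico] at hw
    exact strictMono_of_mem_Ico hw

/-- Keeping only the half-open interlacing relation loses triangles. -/
theorem chooseDet_le_triCount {k : ℕ} (y : Fin k → ℕ) (hy : StrictMono y) :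
    chooseDet y ≤ triCount k y := by
  induction k with
  | zero => simp [chooseDet, triCount]
  | succ k ih =>
    rw [chooseDet_succ y hy.monotone, triCount, Nat.cast_sum]
    have hw : ∀ w ∈ Fintype.piFinset (fun i : Fin k => Finset.Ico (y i.castSucc) (y i.succ)),
        StrictMono w := fun w hw => by
      simp only [Fintype.mem_piFinset, Finset.mem_Ico] at hw
      exact strictMono_of_mem_Ico hw
    refine (Finset.sum_le_sum fun w h => ih w (hw w h)).trans
      (Finset.sum_le_sum_of_subset_of_nonneg (fun w h => ?_) fun _ _ _ => by positivity)
    rw [mem_interlacing]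
    refine ⟨fun i => ?_, hw w h⟩
    simp only [Fintype.mem_piFinset, Finset.mem_Ico] at h
    exact ⟨(h i).1, (h i).2.le⟩

/-- Adding `i` to the `i`-th entry of each row turns weak interlacing into half-open
interlacing. -/
theorem triCount_le_chooseDet {k : ℕ} (y : Fin k → ℕ) (hy : StrictMono y) :
    (triCount k y : ℤ) ≤ chooseDet fun i => y i + i := by
  induction k with
  | zero => simp [chooseDet, triCount]
  | succ k ih =>
    have hy' : StrictMono fun i => y i + (i : ℕ) := fun i j hij => Nat.add_lt_add (hy hij) hij
    rw [chooseDet_succ _ hy'.monotone, triCount, Nat.cast_sum]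
    refine (Finset.sum_le_sum fun w h => ih w (mem_interlacing.1 h).2).trans ?_
    rw [← Finset.sum_image (f := chooseDet) (g := fun (w : Fin k → ℕ) i => w i + (i : ℕ))
      (s := interlacing y)]
    · refine Finset.sum_le_sum_of_subset_of_nonneg (fun w h => ?_) fun w h _ => ?_
      · obtain ⟨w, hw, rfl⟩ := Finset.mem_image.1 h
        rw [mem_interlacing] at hw
        simp only [Fintype.mem_piFinset, Finset.mem_Ico, Fin.val_castSucc, Fin.val_succ]
        exact fun i => ⟨by have := (hw.1 i).1; omega, by have := (hw.1 i).2; omega⟩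
      · simp only [Fintype.mem_piFinset, Finset.mem_Ico] at h
        exact chooseDet_nonneg w (strictMono_of_mem_Ico (y := fun i => y i + (i : ℕ)) h)
    · intro w _ w' _ h
      funext i
      have := congrFun h i
      simpa using this

theorem sum_chooseDet_le_sum_triCount (k N : ℕ) :
    ∑ y ∈ strictTuples k N, chooseDet y ≤ ((∑ y ∈ strictTuples k N, triCount k y : ℕ) : ℤ) := by
  rw [Nat.cast_sum]
  exact Finset.sum_le_sum fun y hy => chooseDet_le_triCount y (mem_strictTuples.1 hy).2

theorem sum_triCount_le_sum_chooseDet (k N : ℕ) :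
    ((∑ y ∈ strictTuples k N, triCount k y : ℕ) : ℤ) ≤
      ∑ y ∈ strictTuples k (N + k), chooseDet y := by
  rw [Nat.cast_sum]
  refine (Finset.sum_le_sum fun y hy =>
    triCount_le_chooseDet y (mem_strictTuples.1 hy).2).trans ?_
  rw [← Finset.sum_image (f := chooseDet) (g := fun (w : Fin k → ℕ) i => w i + (i : ℕ))
    (s := strictTuples k N)]
  · refine Finset.sum_le_sum_of_subset_of_nonneg (fun w h => ?_) fun w h _ =>
      chooseDet_nonneg w (mem_strictTuples.1 h).2
    obtain ⟨w, hw, rfl⟩ := Finset.mem_image.1 h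
    rw [mem_strictTuples] at hw ⊢
    exact ⟨fun i => by have := hw.1 i; have := i.2; omega,
      fun i j hij => Nat.add_lt_add (hw.2 hij) hij⟩
  · intro w _ w' _ h
    funext i
    have := congrFun h i
    simpa using this

/-! ### Monotone triangles as chains of sets -/

/-- The number of elements of `B` below `j`. -/
def rho (B : Finset ℕ) (j : ℕ) : ℕ := (B.filter (· < j)).card

/-- `B'` and `B` can be consecutive rows of a monotone triangle, phrased with counting functions:
the row of the alternating sign matrix between them has partial sums `rho B - rho B'`. -/
def Interlace (B' B : Finset ℕ) : Prop :=
  B.card = B'.card + 1 ∧ ∀ j, rho B' j ≤ rho B j ∧ rho B j ≤ rho B' j + 1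

theorem lt_rho_image {k : ℕ} {y : Fin k → ℕ} (hy : StrictMono y) (i : Fin k) (j : ℕ) :
    (i : ℕ) < rho (Finset.univ.image y) j ↔ y i < j := by
  have h : rho (Finset.univ.image y) j = (Finset.univ.filter fun i => y i < j).card := by
    rw [rho, Finset.filter_image, Finset.card_image_of_injective _ hy.injective]
  rw [h]
  constructor
  · intro hi
    by_contra hij
    have hsub : (Finset.univ.filter fun i => y i < j) ⊆ Finset.Iio i := fun l hl => by
      rw [Finset.mem_filter] at hl
      rw [Finset.mem_Iio]
      exact hy.lt_iff_lt.1 (hl.2.trans_le (not_lt.1 hij))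
    have := Finset.card_le_card hsub
    rw [Fin.card_Iio] at this
    omega
  · intro hij
    have hsub : Finset.Iic i ⊆ (Finset.univ.filter fun i => y i < j) := fun l hl => by
      rw [Finset.mem_Iic] at hl
      rw [Finset.mem_filter]
      exact ⟨Finset.mem_univ _, (hy.monotone hl).trans_lt hij⟩
    have := Finset.card_le_card hsub
    rw [Fin.card_Iic] at this
    omega

theorem rho_image_le {k : ℕ} (y : Fin k → ℕ) (j : ℕ) : rho (Finset.univ.image y) j ≤ k := by
  refine (Finset.card_filter_le _ _).trans (Finset.card_image_le.trans ?_)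
  simp

/-- For rows written as increasing tuples, the counting-function form of interlacing is the usual
one. It rests on `i < rho (image y) j ↔ y i < j`. -/
theorem interlace_image_iff {k : ℕ} {y : Fin (k + 1) → ℕ} {w : Fin k → ℕ} (hy : StrictMono y)
    (hw : StrictMono w) :
    Interlace (Finset.univ.image w) (Finset.univ.image y) ↔
      ∀ i, y i.castSucc ≤ w i ∧ w i ≤ y i.succ := by
  constructor
  · rintro ⟨-, h⟩ i
    constructor
    · have h1 := (lt_rho_image hw i (w i + 1)).2 (Nat.lt_succ_self _)
      have h2 := (lt_rho_image hy i.castSucc (w i + 1)).1 (h1.trans_le (h _).1)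
      omega
    · have h1 := (lt_rho_image hy i.succ (y i.succ + 1)).2 (Nat.lt_succ_self _)
      have h2 := (h (y i.succ + 1)).2
      rw [Fin.val_succ] at h1
      have h3 := (lt_rho_image hw i (y i.succ + 1)).1 (by omega)
      omega
  · intro h
    refine ⟨?_, fun j => ⟨?_, ?_⟩⟩
    · rw [Finset.card_image_of_injective _ hy.injective,
        Finset.card_image_of_injective _ hw.injective]
      simp
    · by_contra hlt
      rw [not_le] at hlt
      have hk := rho_image_le w j
      have h1 := (lt_rho_image hw ⟨_, hlt.trans_le hk⟩ j).1 hlt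
      have h2 := (lt_rho_image hy (Fin.castSucc ⟨_, hlt.trans_le hk⟩) j).2 ((h _).1.trans_lt h1)
      exact lt_irrefl _ h2
    · by_contra hlt
      rw [not_le] at hlt
      have hk := rho_image_le y j
      have hlt' : rho (Finset.univ.image w) j < k := by omega
      have h1 := (lt_rho_image hy (Fin.succ ⟨_, hlt'⟩) j).1 hlt
      have h2 := (lt_rho_image hw ⟨_, hlt'⟩ j).2 ((h _).2.trans_lt h1)
      exact lt_irrefl _ h2

theorem exists_strictMono_image {k : ℕ} {B : Finset ℕ} (hB : B.card = k) :
    ∃ w : Fin k → ℕ, StrictMono w ∧ Finset.univ.image w = B :=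
  ⟨B.orderEmbOfFin hB, (B.orderEmbOfFin hB).strictMono, B.image_orderEmbOfFin_univ hB⟩

theorem strictMono_image_inj {k : ℕ} {w w' : Fin k → ℕ} (hw : StrictMono w) (hw' : StrictMono w')
    (h : Finset.univ.image w = Finset.univ.image w') : w = w' := by
  have hc : (Finset.univ.image w').card = k := by
    rw [Finset.card_image_of_injective _ hw'.injective]; simp
  exact (Finset.orderEmbOfFin_unique hc (fun i => by simp [← h]) hw).trans
    (Finset.orderEmbOfFin_unique hc (fun i => by simp) hw').symm

/-- `c 0, …, c k` are the rows (as sets) of a monotone triangle, preceded by the empty row;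
the remaining values of `c` are fixed to be empty. -/
structure RowChain (k : ℕ) (c : ℕ → Finset ℕ) : Prop where
  zero : c 0 = ∅
  step : ∀ i < k, Interlace (c i) (c (i + 1))
  tail : ∀ i, k < i → c i = ∅

theorem RowChain.card {k : ℕ} {c : ℕ → Finset ℕ} (h : RowChain k c) :
    ∀ i ≤ k, (c i).card = i := by
  intro i
  induction i with
  | zero => intro _; simp [h.zero]
  | succ i ih => intro hi; rw [(h.step i hi).1, ih (by omega)]

open Classical in
/-- The monotone triangles with bottom row `y`, as chains of sets, built row by row from the bottom;
`Function.update` places the bottom row at index `k`. -/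
noncomputable def chains : (k : ℕ) → (Fin k → ℕ) → Finset (ℕ → Finset ℕ)
  | 0, _ => {fun _ => ∅}
  | k + 1, y => (interlacing y).biUnion fun w =>
      (chains k w).image fun c => Function.update c (k + 1) (Finset.univ.image y)

theorem mem_chains {k : ℕ} {y : Fin k → ℕ} (hy : StrictMono y) {c : ℕ → Finset ℕ} :
    c ∈ chains k y ↔ RowChain k c ∧ c k = Finset.univ.image y := by
  induction k generalizing c with
  | zero =>
    simp only [chains, Finset.mem_singleton]
    constructor
    · rintro rfl
      exact ⟨⟨rfl, by simp, by simp⟩, by simp⟩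
    · rintro ⟨h, -⟩
      funext i
      rcases Nat.eq_zero_or_pos i with rfl | hi
      · exact h.zero
      · exact h.tail i hi
  | succ k ih =>
    simp only [chains, Finset.mem_biUnion, Finset.mem_image]
    constructor
    · rintro ⟨w, hw, c, hc, rfl⟩
      rw [mem_interlacing] at hw
      obtain ⟨h, hck⟩ := (ih hw.2).1 hc
      refine ⟨⟨?_, fun i hi => ?_, fun i hi => ?_⟩, by simp⟩
      · rw [Function.update_of_ne (by omega), h.zero]
      · rw [Function.update_of_ne (by omega)]
        rcases Nat.lt_succ_iff_lt_or_eq.1 hi with hi | rfl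
        · rw [Function.update_of_ne (by omega)]
          exact h.step i hi
        · rw [Function.update_self, hck]
          exact (interlace_image_iff hy hw.2).2 hw.1
      · rw [Function.update_of_ne (by omega), h.tail i (by omega)]
    · rintro ⟨h, hck⟩
      obtain ⟨w, hw, hwc⟩ := exists_strictMono_image (h.card k (by omega))
      refine ⟨w, ?_, Function.update c (k + 1) ∅, ?_, ?_⟩
      · rw [mem_interlacing]
        refine ⟨(interlace_image_iff hy hw).1 ?_, hw⟩
        rw [hwc, ← hck]
        exact h.step k (by omega)
      · rw [ih hw]
        refine ⟨⟨?_, fun i hi => ?_, fun i hi => ?_⟩, ?_⟩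
        · rw [Function.update_of_ne (by omega), h.zero]
        · rw [Function.update_of_ne (by omega), Function.update_of_ne (by omega)]
          exact h.step i (by omega)
        · rcases Nat.eq_or_lt_of_le hi with rfl | hi
          · simp
          · rw [Function.update_of_ne (by omega), h.tail i hi]
        · rw [Function.update_of_ne (by omega), hwc]
      · rw [Function.update_idem, ← hck, Function.update_eq_self]

theorem card_chains {k : ℕ} {y : Fin k → ℕ} : (chains k y).card = triCount k y := by
  classical
  induction k with
  | zero => simp [chains, triCount]
  | succ k ih =>
    rw [chains, triCount, Finset.card_biUnion]
    · refine Finset.sum_congr rfl fun w hw => ?_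
      rw [Finset.card_image_of_injOn, ih]
      intro c hc c' hc' hcc
      have hw := (mem_interlacing.1 hw).2
      have h1 := ((mem_chains hw).1 hc).1
      have h2 := ((mem_chains hw).1 hc').1
      funext i
      by_cases hi : i = k + 1
      · rw [hi, h1.tail _ (by omega), h2.tail _ (by omega)]
      · have := congrFun hcc i
        simpa [Function.update_of_ne hi] using this
    · intro w hw w' hw' hne
      rw [Function.onFun, Finset.disjoint_left]
      intro c hc hc'
      obtain ⟨d, hd, rfl⟩ := Finset.mem_image.1 hc
      obtain ⟨d', hd', hdd⟩ := Finset.mem_image.1 hc'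
      have hw := (mem_interlacing.1 hw).2
      have hw' := (mem_interlacing.1 hw').2
      refine hne (strictMono_image_inj hw hw' ?_)
      rw [← ((mem_chains hw).1 hd).2, ← ((mem_chains hw').1 hd').2]
      have := congrFun hdd k
      simpa [Function.update_of_ne (show k ≠ k + 1 by omega)] using this.symm

theorem ncard_rowChain (n k : ℕ) :
    {c : ℕ → Finset ℕ | RowChain k c ∧ c k ⊆ Finset.range n}.ncard =
      ∑ y ∈ strictTuples k n, triCount k y := by
  classical
  have h : {c : ℕ → Finset ℕ | RowChain k c ∧ c k ⊆ Finset.range n} =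
      ((strictTuples k n).biUnion (chains k) : Finset _) := by
    ext c
    simp only [Set.mem_ofPred_eq, Finset.coe_biUnion, Finset.mem_coe, Set.mem_iUnion]
    constructor
    · rintro ⟨h, hn⟩
      obtain ⟨w, hw, hwc⟩ := exists_strictMono_image (h.card k le_rfl)
      refine ⟨w, mem_strictTuples.2 ⟨fun i => ?_, hw⟩, (mem_chains hw).2 ⟨h, hwc.symm⟩⟩
      rw [← hwc] at hn
      exact Finset.mem_range.1 (hn (Finset.mem_image_of_mem _ (Finset.mem_univ i)))
    · rintro ⟨y, hy, hc⟩
      rw [mem_strictTuples] at hy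
      obtain ⟨h, hck⟩ := (mem_chains hy.2).1 hc
      refine ⟨h, ?_⟩
      rw [hck]
      intro j hj
      obtain ⟨i, -, rfl⟩ := Finset.mem_image.1 hj
      exact Finset.mem_range.2 (hy.1 i)
  rw [h, Set.ncard_coe_finset, Finset.card_biUnion]
  · exact Finset.sum_congr rfl fun y _ => card_chains
  · intro y hy y' hy' hne
    rw [Function.onFun, Finset.disjoint_left]
    intro c hc hc'
    have hy := (mem_strictTuples.1 hy).2
    have hy' := (mem_strictTuples.1 hy').2
    exact hne (strictMono_image_inj hy hy'
      (((mem_chains hy).1 hc).2.symm.trans ((mem_chains hy').1 hc').2))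

/-! ### Corner sum matrices -/

/-- The sum of the first `j` entries of `f`. -/
def partialSum {n : ℕ} (f : Fin n → ℤ) (j : ℕ) : ℤ := ∑ q : Fin n, if q.1 < j then f q else 0

theorem partialSum_zero {n : ℕ} (f : Fin n → ℤ) : partialSum f 0 = 0 := by simp [partialSum]

theorem partialSum_succ {n : ℕ} (f : Fin n → ℤ) (j : Fin n) :
    partialSum f (j + 1) = partialSum f j + f j := by
  have h : f j = ∑ q : Fin n, if q = j then f q else 0 := by simp
  rw [h, partialSum, partialSum, ← Finset.sum_add_distrib]
  refine Finset.sum_congr rfl fun q _ => ?_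
  rcases lt_trichotomy q.1 j.1 with hq | hq | hq
  · rw [if_pos (by omega), if_pos hq, if_neg (by rintro rfl; omega), add_zero]
  · rw [if_pos (by omega), if_neg (by omega), if_pos (Fin.ext hq), zero_add]
  · rw [if_neg (by omega), if_neg (by omega), if_neg (by rintro rfl; omega), add_zero]

theorem partialSum_self {n : ℕ} (f : Fin n → ℤ) : partialSum f n = ∑ q, f q := by
  simp [partialSum]

theorem partialSum_telescope {n : ℕ} (f : Fin n → ℤ) (g : ℕ → ℤ)
    (h : ∀ q : Fin n, f q = g (q + 1) - g q) (j : ℕ) (hj : j ≤ n) :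
    partialSum f j = g j - g 0 := by
  induction j with
  | zero => simp [partialSum_zero]
  | succ j ih =>
    rw [partialSum_succ f ⟨j, hj⟩, ih (by omega), h]
    simp

theorem rk_eq_rows (n : ℕ) (A : Matrix (Fin n) (Fin n) ℤ) (i j : ℕ) :
    rk n A i j = partialSum (fun p => partialSum (A p) j) i := by
  unfold rk partialSum
  refine Finset.sum_congr rfl fun p _ => ?_
  by_cases hp : p.1 < i <;> simp [hp]

theorem rk_eq_cols (n : ℕ) (A : Matrix (Fin n) (Fin n) ℤ) (i j : ℕ) :
    rk n A i j = partialSum (fun q => partialSum (fun p => A p q) i) j := by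
  unfold rk partialSum
  rw [Finset.sum_comm]
  refine Finset.sum_congr rfl fun q _ => ?_
  by_cases hq : q.1 < j <;> simp [hq]

/-- The corner sum matrices of alternating sign matrices: steps in `{0, 1}` in both directions and
the boundary values of a permutation matrix. -/
structure IsCornerSum (n : ℕ) (r : ℕ → ℕ → ℤ) : Prop where
  top : ∀ j ≤ n, r 0 j = 0
  left : ∀ i ≤ n, r i 0 = 0
  bot : ∀ j ≤ n, r n j = j
  right : ∀ i ≤ n, r i n = i
  row : ∀ i < n, ∀ j ≤ n, r (i + 1) j = r i j ∨ r (i + 1) j = r i j + 1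
  col : ∀ i ≤ n, ∀ j < n, r i (j + 1) = r i j ∨ r i (j + 1) = r i j + 1

/-- The row and column steps of `rk n A` are the partial column and row sums of `A`. -/
theorem IsASM.isCornerSum {n : ℕ} {A : Matrix (Fin n) (Fin n) ℤ} (hA : IsASM n A) :
    IsCornerSum n (rk n A) := by
  obtain ⟨-, hrow, hcol, hrs, hcs⟩ := hA
  refine ⟨fun j _ => ?_, fun i _ => ?_, fun j hj => ?_, fun i hi => ?_, fun i hi j hj => ?_,
    fun i hi j hj => ?_⟩
  · rw [rk_eq_rows, partialSum_zero]
  · rw [rk_eq_cols, partialSum_zero]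
  · rw [rk_eq_cols, partialSum_telescope _ (fun j => (j : ℤ)) (fun q => ?_) j hj]
    · simp
    · rw [partialSum_self, hcs]; simp
  · rw [rk_eq_rows, partialSum_telescope _ (fun j => (j : ℤ)) (fun q => ?_) i hi]
    · simp
    · rw [partialSum_self, hrs]; simp
  · have h := hrow ⟨i, hi⟩ j hj
    rw [rk_eq_rows, rk_eq_rows, partialSum_succ _ ⟨i, hi⟩]
    change partialSum (A ⟨i, hi⟩) j = 0 ∨ partialSum (A ⟨i, hi⟩) j = 1 at h
    dsimp only
    omega
  · have h := hcol ⟨j, hj⟩ i hi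
    rw [rk_eq_cols, rk_eq_cols, partialSum_succ _ ⟨j, hj⟩]
    change partialSum (fun p => A p ⟨j, hj⟩) i = 0 ∨ partialSum (fun p => A p ⟨j, hj⟩) i = 1 at h
    dsimp only
    omega

theorem entry_eq_rk {n : ℕ} (A : Matrix (Fin n) (Fin n) ℤ) (i j : Fin n) :
    A i j = (rk n A (i + 1) (j + 1) - rk n A i (j + 1)) - (rk n A (i + 1) j - rk n A i j) := by
  simp only [rk_eq_rows, partialSum_succ]
  ring

/-- The matrix with corner sums `r`. -/
def ofCornerSum (n : ℕ) (r : ℕ → ℕ → ℤ) : Matrix (Fin n) (Fin n) ℤ :=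
  Matrix.of fun i j => (r (i + 1) (j + 1) - r i (j + 1)) - (r (i + 1) j - r i j)

theorem rk_ofCornerSum {n : ℕ} {r : ℕ → ℕ → ℤ} (hr : IsCornerSum n r) {i j : ℕ} (hi : i ≤ n)
    (hj : j ≤ n) : rk n (ofCornerSum n r) i j = r i j := by
  rw [rk_eq_rows, partialSum_telescope _ (fun i => r i j) (fun p => ?_) i hi]
  · simp [hr.top j hj]
  · rw [partialSum_telescope (ofCornerSum n r p) (fun j => r (p + 1) j - r p j) (fun q => rfl) j hj,
      hr.left _ p.2, hr.left _ p.2.le]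
    simp

theorem isASM_ofCornerSum {n : ℕ} {r : ℕ → ℕ → ℤ} (hr : IsCornerSum n r) :
    IsASM n (ofCornerSum n r) := by
  have hrow : ∀ i : Fin n, ∀ j ≤ n, partialSum (ofCornerSum n r i) j = r (i + 1) j - r i j := by
    intro i j hj
    rw [partialSum_telescope (ofCornerSum n r i) (fun j => r (i + 1) j - r i j) (fun q => rfl) j hj,
      hr.left _ i.2, hr.left _ i.2.le]
    simp
  have hcol : ∀ j : Fin n, ∀ i ≤ n,
      partialSum (fun p => ofCornerSum n r p j) i = r i (j + 1) - r i j := by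
    intro j i hi
    rw [partialSum_telescope _ (fun i => r i (j + 1) - r i j)
      (fun q => by simp only [ofCornerSum, Matrix.of_apply]; ring) i hi,
      hr.top _ j.2, hr.top _ j.2.le]
    simp
  refine ⟨fun i j => ?_, fun i j hj => ?_, fun j i hi => ?_, fun i => ?_, fun j => ?_⟩
  · have h1 := hr.row i i.2 (j + 1) j.2
    have h2 := hr.row i i.2 j j.2.le
    simp only [ofCornerSum, Matrix.of_apply]
    omega
  · have h1 := hr.row i i.2 j hj
    have h2 := hrow i j hj
    change partialSum (ofCornerSum n r i) j = 0 ∨ partialSum (ofCornerSum n r i) j = 1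
    omega
  · have h1 := hr.col i hi j j.2
    have h2 := hcol j i hi
    change partialSum (fun p => ofCornerSum n r p j) i = 0 ∨
      partialSum (fun p => ofCornerSum n r p j) i = 1
    omega
  · have h := hrow i n le_rfl
    rw [partialSum_self, hr.right _ i.2, hr.right _ i.2.le] at h
    rw [h]; push_cast; ring
  · have h := hcol j n le_rfl
    rw [partialSum_self, hr.bot _ j.2, hr.bot _ j.2.le] at h
    rw [h]; push_cast; ring

theorem rho_eq_card (B : Finset ℕ) (j : ℕ) :
    rho B j = ∑ x ∈ Finset.range j, if x ∈ B then 1 else 0 := by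
  rw [← Finset.card_filter, rho]
  congr 1
  ext x
  simp [and_comm]

theorem rho_zero (B : Finset ℕ) : rho B 0 = 0 := by simp [rho]

theorem rho_succ (B : Finset ℕ) (j : ℕ) : rho B (j + 1) = rho B j + if j ∈ B then 1 else 0 := by
  rw [rho_eq_card, rho_eq_card, Finset.sum_range_succ]

theorem rho_le (B : Finset ℕ) (j : ℕ) : rho B j ≤ j := by
  induction j with
  | zero => simp [rho_zero]
  | succ j ih => rw [rho_succ]; split_ifs <;> omega

theorem rho_of_subset {B : Finset ℕ} {n : ℕ} (hB : B ⊆ Finset.range n) {j : ℕ} (hj : n ≤ j) :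
    rho B j = B.card := by
  rw [rho, Finset.filter_true_of_mem]
  exact fun x hx => (Finset.mem_range.1 (hB hx)).trans_le hj

/-- Each row of a chain whose bottom row lies in `{0, …, n - 1}` has all its elements below `n`,
because interlacing loses at most one element below `n` at each step. -/
theorem RowChain.rho_right {n k : ℕ} {c : ℕ → Finset ℕ} (h : RowChain k c)
    (hn : c k ⊆ Finset.range n) {i : ℕ} (hi : i ≤ k) : rho (c i) n = i := by
  induction hi using Nat.decreasingInduction with
  | self => rw [rho_of_subset hn le_rfl, h.card k le_rfl]
  | of_succ i hi ih =>
    have h1 := ((h.step i hi).2 n).2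
    have h2 : rho (c i) n ≤ (c i).card := Finset.card_filter_le _ _
    rw [h.card i hi.le] at h2
    omega

theorem RowChain.subset {n k : ℕ} {c : ℕ → Finset ℕ} (h : RowChain k c)
    (hn : c k ⊆ Finset.range n) {i : ℕ} (hi : i ≤ k) : c i ⊆ Finset.range n := by
  have h1 : ((c i).filter (· < n)).card = (c i).card :=
    (h.rho_right hn hi).trans (h.card i hi).symm
  intro x hx
  exact Finset.mem_range.2 (Finset.filter_card_eq h1 x hx)

/-- Below row `k` a corner sum matrix subject to the conditions of `InASMI` is determined by its
row `k`: in each column it grows by `1` until it reaches its final value, then stays constant. -/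
theorem IsCornerSum.eq_min {n k : ℕ} {r : ℕ → ℕ → ℤ} (hr : IsCornerSum n r)
    (hI : ∀ i, k < i → i < n → ∀ j, 1 ≤ j → j ≤ n →
      r i j = r (i - 1) j + 1 ∨ r i j = r (i + 1) j)
    {i j : ℕ} (hki : k ≤ i) (hin : i ≤ n) (hj : j ≤ n) :
    r i j = min (j : ℤ) (r k j + (i - k : ℕ)) := by
  rcases Nat.eq_zero_or_pos j with rfl | hj0
  · have h1 := hr.left i hin
    have h2 := hr.left k (hki.trans hin)
    rw [h1, h2]
    simp
  have hmono : ∀ a b, a ≤ b → b ≤ n → r a j ≤ r b j := by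
    intro a b hab
    induction b, hab using Nat.le_induction with
    | base => simp
    | succ b _ ih =>
      intro hb
      have h1 := hr.row b hb j hj
      have h2 := ih (by omega)
      omega
  have hle : ∀ a, a ≤ n → r a j ≤ j := fun a ha => (hmono a n ha le_rfl).trans_eq (hr.bot j hj)
  -- once the value in a column repeats below row `k`, the condition repeats it until row `n`
  have hconst : ∀ b, k < b → b ≤ n → r b j = r (b - 1) j → r b j = j := by
    intro b hkb hbn
    induction hbn using Nat.decreasingInduction with
    | self => intro _; exact hr.bot j hj
    | of_succ b hbn ih =>
      intro h
      have h1 := hI b hkb hbn j hj0 hj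
      have h2 : r b j = r (b + 1) j := by omega
      rw [h2]
      exact ih (by omega) (by simp [h2])
  have hlin : r i j ≤ r k j + (i - k : ℕ) ∧ (r i j = j ∨ r i j = r k j + (i - k : ℕ)) := by
    induction i, hki using Nat.le_induction with
    | base => simp
    | succ i hki ih =>
      obtain ⟨h1, h2⟩ := ih (by omega)
      have h3 := hr.row i hin j hj
      have h4 := hle (i + 1) hin
      have h5 : r (i + 1) j = r i j → r (i + 1) j = j := fun h =>
        hconst (i + 1) (by omega) hin (by simpa using h)
      omega
  have := hle i hin
  omega

/-- Row `i` of the monotone triangle of `A`, for `i ≤ k`: the columns whose partial sum over the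
first `i` rows is `1`. -/
def rowsOf (n k : ℕ) (A : Matrix (Fin n) (Fin n) ℤ) (i : ℕ) : Finset ℕ :=
  if i ≤ k then (Finset.range n).filter fun j => rk n A i (j + 1) = rk n A i j + 1 else ∅

/-- The rows of the monotone triangle recover the first `k` rows of the corner sum matrix. -/
theorem rho_rowsOf {n k : ℕ} {A : Matrix (Fin n) (Fin n) ℤ} (hA : IsASM n A) {i j : ℕ}
    (hkn : k ≤ n) (hi : i ≤ k) (hj : j ≤ n) : (rho (rowsOf n k A i) j : ℤ) = rk n A i j := by
  have hr := hA.isCornerSum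
  induction j with
  | zero => rw [rho_zero, hr.left i (by omega)]; simp
  | succ j ih =>
    rw [rho_succ]
    push_cast
    rw [ih (by omega)]
    have h := hr.col i (by omega) j hj
    have hm : j ∈ rowsOf n k A i ↔ rk n A i (j + 1) = rk n A i j + 1 := by
      rw [rowsOf, if_pos hi, Finset.mem_filter, Finset.mem_range]
      exact and_iff_right hj
    split_ifs with h1
    · exact (hm.1 h1).symm
    · have := mt hm.2 h1
      omega

theorem rowsOf_subset (n k : ℕ) (A : Matrix (Fin n) (Fin n) ℤ) (i : ℕ) :
    rowsOf n k A i ⊆ Finset.range n := by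
  unfold rowsOf
  split_ifs
  · exact Finset.filter_subset _ _
  · simp

theorem rowChain_rowsOf {n k : ℕ} {A : Matrix (Fin n) (Fin n) ℤ} (hA : IsASM n A) (hkn : k ≤ n) :
    RowChain k (rowsOf n k A) := by
  have hr := hA.isCornerSum
  have hcard : ∀ i ≤ k, (rowsOf n k A i).card = i := by
    intro i hi
    have := rho_rowsOf hA hkn hi le_rfl
    rw [rho_of_subset (rowsOf_subset n k A i) le_rfl, hr.right i (by omega)] at this
    exact_mod_cast this
  refine ⟨Finset.card_eq_zero.1 (hcard 0 (by omega)), fun i hi => ⟨?_, fun j => ?_⟩, fun i hi => ?_⟩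
  · rw [hcard i (by omega), hcard (i + 1) (by omega)]
  · rcases le_total j n with hj | hj
    · have h1 := rho_rowsOf hA hkn hi.le hj
      have h2 := rho_rowsOf hA hkn (show i + 1 ≤ k from hi) hj
      have h3 := hr.row i (by omega) j hj
      omega
    · rw [rho_of_subset (rowsOf_subset n k A i) hj, rho_of_subset (rowsOf_subset n k A (i + 1)) hj,
        hcard i (by omega), hcard (i + 1) (by omega)]
      omega
  · rw [rowsOf, if_neg (by omega)]

/-- The corner sums of the matrix in `InASMI` whose first rows are given by `c`. -/
def extendChain (k : ℕ) (c : ℕ → Finset ℕ) (i j : ℕ) : ℤ :=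
  min (j : ℤ) (rho (c (min i k)) j + (i - k : ℕ))

theorem extendChain_of_le {k : ℕ} (c : ℕ → Finset ℕ) {i : ℕ} (hi : i ≤ k) (j : ℕ) :
    extendChain k c i j = rho (c i) j := by
  have := rho_le (c i) j
  rw [extendChain, min_eq_left hi, Nat.sub_eq_zero_of_le hi]
  omega

theorem extendChain_of_ge {k : ℕ} (c : ℕ → Finset ℕ) {i : ℕ} (hi : k ≤ i) (j : ℕ) :
    extendChain k c i j = min (j : ℤ) (rho (c k) j + (i - k : ℕ)) := by
  rw [extendChain, min_eq_right hi]

/-- Truncating at `j` keeps the steps in `{0, 1}`; the last row reaches `j` in column `j` since at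
most `n - k` of the first `j` columns lie outside row `k`. -/
theorem isCornerSum_extendChain {n k : ℕ} {c : ℕ → Finset ℕ} (h : RowChain k c)
    (hn : c k ⊆ Finset.range n) (hkn : k ≤ n) : IsCornerSum n (extendChain k c) := by
  -- the number of columns outside row `k` among the first `j` is at most `n - k`
  have hcompl : ∀ j ≤ n, j + k ≤ rho (c k) j + n := by
    intro j hj
    induction hj using Nat.decreasingInduction with
    | self => rw [h.rho_right hn le_rfl]; omega
    | of_succ j hj ih =>
      rw [rho_succ] at ih
      split_ifs at ih <;> omega
  refine ⟨fun j _ => ?_, fun i _ => ?_, fun j hj => ?_, fun i hi => ?_, fun i hi j hj => ?_,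
    fun i hi j hj => ?_⟩
  · rw [extendChain_of_le c (Nat.zero_le k), h.zero]; simp [rho]
  · rw [extendChain, rho_zero]
    omega
  · rw [extendChain_of_ge c hkn]
    have := hcompl j hj
    omega
  · have h1 := h.rho_right hn (min_le_right i k)
    rw [extendChain, h1]
    omega
  · rcases lt_or_ge i k with hik | hik
    · rw [extendChain_of_le c (show i + 1 ≤ k from hik), extendChain_of_le c hik.le]
      have := (h.step i hik).2 j
      omega
    · rw [extendChain_of_ge c hik, extendChain_of_ge c (by omega)]
      omega
  · simp only [extendChain]
    rw [rho_succ]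
    split_ifs <;> push_cast <;> omega

/-- Matrices in `InASMI` for the indices `k + 1, …, n - 1` correspond to monotone triangles with `k`
rows, via their first `k` rows. -/
theorem ncard_inASMI {n k : ℕ} (hkn : k + 1 ≤ n) :
    {A : Matrix (Fin n) (Fin n) ℤ | InASMI n (Finset.Icc (k + 1) (n - 1)) A}.ncard =
      {c : ℕ → Finset ℕ | RowChain k c ∧ c k ⊆ Finset.range n}.ncard := by
  have hk : k ≤ n := by omega
  refine Set.ncard_congr (fun A _ => rowsOf n k A) ?_ ?_ ?_
  · intro A hA
    exact ⟨rowChain_rowsOf hA.1 hk, rowsOf_subset n k A k⟩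
  · intro A A' hA hA' h
    have hmin : ∀ A, InASMI n (Finset.Icc (k + 1) (n - 1)) A → ∀ i j, k ≤ i → i ≤ n → j ≤ n →
        rk n A i j = min (j : ℤ) (rk n A k j + (i - k : ℕ)) := fun A hA i j hki hin hj =>
      hA.1.isCornerSum.eq_min (fun i hki hin => hA.2 i (Finset.mem_Icc.2 ⟨hki, by omega⟩))
        hki hin hj
    have hle : ∀ i ≤ k, ∀ j ≤ n, rk n A i j = rk n A' i j := fun i hi j hj => by
      rw [← rho_rowsOf hA.1 hk hi hj, ← rho_rowsOf hA'.1 hk hi hj]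
      exact congrArg (fun B => (rho B j : ℤ)) (congrFun h i)
    have hall : ∀ i ≤ n, ∀ j ≤ n, rk n A i j = rk n A' i j := fun i hi j hj => by
      rcases le_total i k with hik | hik
      · exact hle i hik j hj
      · rw [hmin A hA i j hik hi hj, hmin A' hA' i j hik hi hj, hle k le_rfl j hj]
    ext i j
    rw [entry_eq_rk A, entry_eq_rk A', hall _ i.2 _ j.2, hall _ i.2.le _ j.2, hall _ i.2 _ j.2.le,
      hall _ i.2.le _ j.2.le]
  · rintro c ⟨h, hn⟩
    have hr := isCornerSum_extendChain h hn hk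
    refine ⟨ofCornerSum n (extendChain k c), ⟨isASM_ofCornerSum hr, fun i hi j _ hj => ?_⟩, ?_⟩
    · rw [Finset.mem_Icc] at hi
      rw [rk_ofCornerSum hr (by omega) hj, rk_ofCornerSum hr (by omega) hj,
        rk_ofCornerSum hr (by omega) hj, extendChain_of_ge c (by omega),
        extendChain_of_ge c (by omega), extendChain_of_ge c (by omega)]
      omega
    · funext i
      by_cases hi : i ≤ k
      · ext j
        have hsub := h.subset hn hi
        rw [rowsOf, if_pos hi, Finset.mem_filter]
        constructor
        · rintro ⟨hj, he⟩
          rw [Finset.mem_range] at hj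
          rw [rk_ofCornerSum hr (by omega) hj, rk_ofCornerSum hr (by omega) hj.le,
            extendChain_of_le c hi, extendChain_of_le c hi, rho_succ] at he
          by_contra hjc
          rw [if_neg hjc] at he
          omega
        · intro hjc
          have hj := Finset.mem_range.1 (hsub hjc)
          refine ⟨hsub hjc, ?_⟩
          rw [rk_ofCornerSum hr (by omega) hj, rk_ofCornerSum hr (by omega) hj.le,
            extendChain_of_le c hi, extendChain_of_le c hi, rho_succ, if_pos hjc]
          push_cast
          ring
      · rw [rowsOf, if_neg hi, h.tail i (by omega)]

/-! ### Asymptotics of the number of triangles -/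

theorem cast_chooseDet {k : ℕ} (y : Fin k → ℕ) :
    ((chooseDet y : ℤ) : ℝ) = (Matrix.of fun i j : Fin k => ((y i).choose j : ℝ)).det := by
  have h := (Int.castRingHom ℝ).map_det (Matrix.of fun i j : Fin k => ((y i).choose j : ℤ))
  refine h.trans (congrArg Matrix.det ?_)
  ext i j
  simp

theorem sum_fin_succ_eq (k : ℕ) : ∑ j : Fin k, ((j : ℕ) + 1) = (k + 1) * k / 2 := by
  rw [Fin.sum_univ_eq_sum_range (fun j => j + 1) k]
  have h := Finset.sum_range_id (k + 1)
  rw [Finset.sum_range_succ'] at h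
  simpa using h

theorem tendsto_sum_chooseDet (k : ℕ) :
    Tendsto (fun N : ℕ => ((∑ y ∈ strictTuples k N, chooseDet y : ℤ) : ℝ) /
        (N : ℝ) ^ ((k + 1) * k / 2)) atTop
      (𝓝 (∏ j ∈ Finset.Icc 1 (k - 1), (j.factorial : ℝ) / ((2 * j + 1).factorial : ℝ))) := by
  have h := tendsto_sum_det (fun j : Fin k => (j : ℕ)) Fin.val_injective
  rw [ordIntegral_value, sum_fin_succ_eq] at h
  refine h.congr fun N => ?_
  rw [Int.cast_sum]
  simp_rw [cast_chooseDet]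

theorem tendsto_add_div_pow (k e : ℕ) :
    Tendsto (fun N : ℕ => (((N + k : ℕ) : ℝ) / N) ^ e) atTop (𝓝 1) := by
  have h : Tendsto (fun N : ℕ => 1 + (k : ℝ) / N) atTop (𝓝 (1 + 0)) :=
    (tendsto_const_div_atTop_nhds_zero_nat (k : ℝ)).const_add 1
  have h2 := h.pow e
  rw [add_zero, one_pow] at h2
  refine h2.congr' ?_
  filter_upwards [eventually_gt_atTop 0] with N hN
  have : (N : ℝ) ≠ 0 := by positivity
  congr 1
  push_cast
  field_simp

/-- Squeeze the number of triangles between determinant sums over `{0, …, N - 1}` and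
`{0, …, N + k - 1}`, which have the same leading term. -/
theorem tendsto_sum_triCount (k : ℕ) :
    Tendsto (fun N : ℕ => ((∑ y ∈ strictTuples k N, triCount k y : ℕ) : ℝ) /
        (N : ℝ) ^ ((k + 1) * k / 2)) atTop
      (𝓝 (∏ j ∈ Finset.Icc 1 (k - 1), (j.factorial : ℝ) / ((2 * j + 1).factorial : ℝ))) := by
  have hlow := tendsto_sum_chooseDet k
  have hup := (hlow.comp (tendsto_add_atTop_nat k)).mul (tendsto_add_div_pow k ((k + 1) * k / 2))
  rw [mul_one] at hup
  refine tendsto_of_tendsto_of_tendsto_of_le_of_le' hlow hup (Eventually.of_forall fun N => ?_) ?_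
  · gcongr
    exact_mod_cast sum_chooseDet_le_sum_triCount k N
  · filter_upwards [eventually_gt_atTop 0] with N hN
    have hN0 : (N : ℝ) ≠ 0 := by positivity
    have hNk : ((N + k : ℕ) : ℝ) ≠ 0 := by positivity
    simp only [Function.comp_apply]
    rw [div_pow, div_mul_div_cancel₀ (pow_ne_zero _ hNk)]
    gcongr
    exact_mod_cast sum_triCount_le_sum_chooseDet k N

end

/-- For fixed `t ≥ 1`, `|ASM^{{t,…,n-1}}(n)| / n^{t(t-1)/2} → ∏_{j=1}^{t-2} j!/(2j+1)!`
as `n → ∞`. -/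
theorem stmt17 (t : ℕ) (ht : 1 ≤ t) :
    Filter.Tendsto
      (fun n : ℕ =>
        (({A : Matrix (Fin n) (Fin n) ℤ | InASMI n (Finset.Icc t (n - 1)) A}.ncard : ℝ)) /
          (n : ℝ) ^ (t * (t - 1) / 2))
      Filter.atTop
      (nhds (∏ j ∈ Finset.Icc 1 (t - 2),
        (Nat.factorial j : ℝ) / (Nat.factorial (2 * j + 1) : ℝ))) := by
  obtain ⟨k, rfl⟩ : ∃ k, t = k + 1 := ⟨t - 1, by omega⟩
  refine (tendsto_sum_triCount k).congr' ?_
  filter_upwards [Filter.eventually_ge_atTop (k + 1)] with n hn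
  rw [ncard_inASMI hn, ncard_rowChain]
  rfl
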